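/- Let (G,μ) be a discrete measured groupoid and let F ⊂ G be a Borel subset of finite measure. Let E ⊂ G \ F be a Borel subset on which both the source map s and range map r are injective. If (G,μ) is ergodic with atom-free unit space measure, then there exists a Borel subset D with E ⊂ D ⊂ G \ F such that r and s are injective on D and s(D) = G^0 up to null sets (equivalently, by invariance of μ, also r(D) = G^0 up to null sets). -/

import Mathlib

/-!
Choose a bisection `M` of `G` with `E ⊆ M ⊆ Fᶜ` whose source has the largest possible measure. If
`M` is not full, then neither its source nor its range is conull, by invariance. Ergodicity applied
to the pieces of `(s M)ᶜ` cut out by a countable basis shows that almost every unit is reached from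
a set of sources meeting each non-null piece. Such a set is infinite as `μ` has no atoms, so a set
`F` of finite measure cannot contain almost all arrows from `(s M)ᶜ` to `(r M)ᶜ`. The remaining ones
contain a non-null bisection, which can be added to `M`: a contradiction.

A non-null bisection is extracted from a Borel set by passing to a compact set whose image has
almost the same measure and minimizing an injective real function on each fiber. Compactness makes
the set of minimizers Borel and makes it meet every fiber, so no uniformization theorem is needed.
-/

open MeasureTheory

/-- A (minimal formalization of a) discrete measured groupoid: a standard Borel groupoid
`G` with unit space `X`, Borel source and range maps with countable source fibers, and an
invariant measure `μ` on the unit space. -/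
structure DMGroupoid (G X : Type) [MeasurableSpace G] [MeasurableSpace X] where
  s : G → X
  r : G → X
  meas_s : Measurable s
  meas_r : Measurable r
  countable_fibers : ∀ x : X, (s ⁻¹' {x}).Countable
  μ : Measure X
  invariant : ∀ E : Set G, MeasurableSet E →
    ∫⁻ x, Measure.count (E ∩ s ⁻¹' {x}) ∂μ = ∫⁻ x, Measure.count (E ∩ r ⁻¹' {x}) ∂μ

/-- The extension of `μ` to a measure on the groupoid:
`μ(E) = ∫_{G⁰} #(E ∩ s⁻¹(x)) dμ(x)`. -/
noncomputable def DMGroupoid.gMeasure {G X : Type} [MeasurableSpace G] [MeasurableSpace X]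
    (D : DMGroupoid G X) (E : Set G) : ENNReal :=
  ∫⁻ x, Measure.count (E ∩ D.s ⁻¹' {x}) ∂D.μ

/-- Ergodicity (saturation form): for every Borel `A ⊆ G⁰` of positive measure the
saturation `A^G = {x : ∃ γ, s γ ∈ A, r γ = x}` has full measure. -/
def DMGroupoid.SatErgodic {G X : Type} [MeasurableSpace G] [MeasurableSpace X]
    (D : DMGroupoid G X) : Prop :=
  ∀ A : Set X, MeasurableSet A → D.μ A ≠ 0 →
    D.μ {x : X | ∃ γ : G, D.s γ ∈ A ∧ D.r γ = x}ᶜ = 0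

section Maximization

variable {α β : Type*} [Preorder α] [LinearOrder β] [TopologicalSpace β] [OrderClosedTopology β]
  [DenselyOrdered β] [TopologicalSpace.SeparableSpace β]

theorem exists_ge_forall_ge_le {m : α → β} (hm : Monotone m)
    (hbdd : ∀ S : ℕ → α, Monotone S → BddAbove (Set.range S)) (a : α) :
    ∃ b ≥ a, ∀ c ≥ b, m c ≤ m b := by
  have : Nonempty β := ⟨m a⟩
  let q := TopologicalSpace.denseSeq β
  -- At stage `n`, move above the `n`-th value of a dense sequence whenever this is possible.
  have step (n : ℕ) (b : α) : ∃ c ≥ b, ∀ d ≥ b, q n < m d → q n < m c := by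
    by_cases! h : ∃ d ≥ b, q n < m d
    · obtain ⟨d, hbd, hd⟩ := h
      exact ⟨d, hbd, fun _ _ _ ↦ hd⟩
    · exact ⟨b, le_rfl, fun d hbd hd ↦ absurd hd (h d hbd).not_gt⟩
  choose next le_next lt_next using step
  let S (n : ℕ) : α := Nat.rec a next n
  obtain ⟨b, hb⟩ := hbdd S (monotone_nat_of_le_succ fun n ↦ le_next n (S n))
  have hSb (n : ℕ) : S n ≤ b := hb (Set.mem_range_self n)
  refine ⟨b, hSb 0, fun c hbc ↦ le_of_not_gt fun hlt ↦ ?_⟩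
  obtain ⟨_, ⟨n, rfl⟩, hbn, hnc⟩ :=
    (TopologicalSpace.denseRange_denseSeq β).exists_between hlt
  have hnS : q n < m (S (n + 1)) := lt_next n (S n) c ((hSb n).trans hbc) hnc
  exact hbn.not_ge (hnS.le.trans (hm (hSb (n + 1))))

end Maximization

section CompactApproximation

open Set PiNat
open scoped ENNReal

theorem exists_pi_Iio_subset_of_isOpen {n : ℕ → ℕ} {V : Set (ℕ → ℕ)} (hV : IsOpen V)
    (hn : Iic n ⊆ V) : ∃ k, (Iio k).pi (fun i ↦ Iic (n i)) ⊆ V := by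
  let W (k : ℕ) : Set (ℕ → ℕ) := {y | cylinder y k ⊆ V}
  have W_mono : Monotone W := fun _ _ hkl y hy ↦ (cylinder_anti y hkl).trans hy
  have isOpen_W (k : ℕ) : IsOpen (W k) := isOpen_iff_mem_nhds.2 fun y hy ↦
    Filter.mem_of_superset ((isOpen_cylinder _ y k).mem_nhds (self_mem_cylinder y k))
      fun z hz ↦ by rwa [mem_ofPred_eq, mem_cylinder_iff_eq.1 hz]
  have subset_W : Iic n ⊆ ⋃ k, W k := fun y hy ↦ by
    obtain ⟨_, ⟨z, k, rfl⟩, hyz, hzV⟩ :=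
      (isTopologicalBasis_cylinders _).exists_subset_of_mem_open (hn hy) hV
    exact mem_iUnion.2 ⟨k, by rwa [mem_ofPred_eq, mem_cylinder_iff_eq.1 hyz]⟩
  have isCompact_Iic : IsCompact (Iic n) := Icc_bot (a := n) ▸ isCompact_Icc
  obtain ⟨k, hk⟩ := isCompact_Iic.elim_directed_cover W isOpen_W subset_W W_mono.directed_le
  refine ⟨k, fun x hx ↦ hk (mem_Iic.2 (inf_le_right : x ⊓ n ≤ n)) ?_⟩
  exact mem_cylinder_iff.2 fun i hi ↦ (inf_eq_left.2 (hx i hi)).symm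

theorem exists_forall_lt_measure_image_pi_Iio {X : Type*} [MeasurableSpace X] (μ : Measure X)
    {f : (ℕ → ℕ) → X} {c : ℝ≥0∞} (hc : c < μ (range f)) :
    ∃ n : ℕ → ℕ, ∀ k, c < μ (f '' (Iio k).pi fun i ↦ Iic (n i)) := by
  have step (k : ℕ) (S : Set (ℕ → ℕ)) :
      c < μ (f '' S) → ∃ m, c < μ (f '' (Function.eval k ⁻¹' Iic m ∩ S)) := by
    have iUnion_eq : ⋃ m, f '' (Function.eval k ⁻¹' Iic m ∩ S) = f '' S := by
      rw [← image_iUnion, ← iUnion_inter, ← preimage_iUnion, iUnion_Iic, preimage_univ, univ_inter]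
    have monotone_image : Monotone fun m ↦ f '' (Function.eval k ⁻¹' Iic m ∩ S) :=
      fun _ _ hle ↦ image_mono (inter_subset_inter_left S (preimage_mono (Iic_subset_Iic.2 hle)))
    rw [← iUnion_eq, monotone_image.measure_iUnion]
    exact lt_iSup_iff.1
  choose! m hm using step
  let S (k : ℕ) : Set (ℕ → ℕ) := Nat.rec univ (fun k S ↦ Function.eval k ⁻¹' Iic (m k S) ∩ S) k
  have lt_measure_S (k : ℕ) : c < μ (f '' S k) := by
    induction k with
    | zero => rwa [show S 0 = univ from rfl, image_univ]
    | succ k ih => exact hm k (S k) ih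
  have S_eq (k : ℕ) : S k = (Iio k).pi fun i ↦ Iic (m i (S i)) := by
    induction k with
    | zero => simp [S]
    | succ k ih =>
      rw [← Order.succ_eq_add_one, Order.Iio_succ_eq_insert, insert_pi, ← ih]
      rfl
  exact ⟨fun i ↦ m i (S i), fun k ↦ S_eq k ▸ lt_measure_S k⟩

theorem exists_isCompact_subset_lt_measure_image {X Y : Type*} [TopologicalSpace X]
    [MeasurableSpace X] [TopologicalSpace Y] (μ : Measure X) [μ.OuterRegular] {f : Y → X}
    (hf : Continuous f) {A : Set Y} (hA : AnalyticSet A) {c : ℝ≥0∞} (hc : c < μ (f '' A)) :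
    ∃ K ⊆ A, IsCompact K ∧ c < μ (f '' K) := by
  rw [AnalyticSet] at hA
  obtain rfl | ⟨g, hg, rfl⟩ := hA
  · simp at hc
  obtain ⟨d, hcd, hd⟩ := exists_between hc
  rw [← range_comp] at hd
  obtain ⟨n, hn⟩ := exists_forall_lt_measure_image_pi_Iio μ hd
  have isCompact_Iic : IsCompact (Iic n) := Icc_bot (a := n) ▸ isCompact_Icc
  refine ⟨g '' Iic n, image_subset_range _ _, isCompact_Iic.image hg,
    hcd.trans_le (le_of_not_gt fun hlt ↦ ?_)⟩
  obtain ⟨U, hnU, hU, hUd⟩ := exists_isOpen_lt_of_lt _ d hlt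
  obtain ⟨k, hk⟩ := exists_pi_Iio_subset_of_isOpen (hU.preimage (hf.comp hg))
    (image_subset_iff.1 (image_comp f g _ ▸ hnU))
  exact ((hn k).trans_le (measure_mono (image_subset_iff.2 hk))).not_gt hUd

end CompactApproximation

section FiberMinimizers

open Set

variable {X Y β : Type*} {f : Y → X} {φ : Y → β} {C : Set Y}

/-- The points of `C` at which `φ` is minimal among the points of `C` with the same image
under `f`. When `φ` separates the fibers of `f`, this is the section of `f` over `f '' C` that
selects the `φ`-smallest point. -/
def fiberMinimizers [LE β] (f : Y → X) (φ : Y → β) (C : Set Y) : Set Y :=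
  {y ∈ C | ∀ z ∈ C, f z = f y → φ y ≤ φ z}

theorem injOn_fiberMinimizers [PartialOrder β] (h : InjOn (fun y ↦ (f y, φ y)) C) :
    InjOn f (fiberMinimizers f φ C) :=
  fun y hy z hz hyz ↦ h hy.1 hz.1 <| Prod.ext hyz <|
    (hy.2 z hz.1 hyz.symm).antisymm (hz.2 y hy.1 hyz)

variable [LinearOrder β] [TopologicalSpace β] [TopologicalSpace X] [TopologicalSpace Y]

theorem image_fiberMinimizers [ClosedIicTopology β] [T1Space X] (hf : Continuous f)
    (hφ : Continuous φ) (hC : IsCompact C) : f '' fiberMinimizers f φ C = f '' C := by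
  refine (image_mono (sep_subset _ _)).antisymm ?_
  rintro _ ⟨y, hy, rfl⟩
  obtain ⟨z, ⟨hz, hzy⟩, hmin⟩ := (hC.inter_right (isClosed_singleton.preimage hf)).exists_isMinOn
    ⟨y, hy, rfl⟩ hφ.continuousOn
  exact ⟨z, ⟨hz, fun w hw hwz ↦ hmin ⟨hw, hwz.trans hzy⟩⟩, hzy⟩

theorem measurableSet_fiberMinimizers [OrderClosedTopology β] [DenselyOrdered β]
    [TopologicalSpace.SeparableSpace β] [T2Space X] [MeasurableSpace X] [BorelSpace X] [T2Space Y]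
    [MeasurableSpace Y] [BorelSpace Y] (hf : Continuous f) (hφ : Continuous φ)
    (hC : IsCompact C) : MeasurableSet (fiberMinimizers f φ C) := by
  obtain ⟨Q, hQ, hQdense⟩ := TopologicalSpace.exists_countable_dense β
  have eq_diff : fiberMinimizers f φ C =
      C \ ⋃ q ∈ Q, {y | q < φ y} ∩ f ⁻¹' (f '' (C ∩ {z | φ z ≤ q})) := by
    ext y
    simp only [fiberMinimizers, mem_sdiff, mem_iUnion, not_exists]
    refine and_congr_right fun _ ↦ ⟨?_, fun h z hz hzy ↦ le_of_not_gt fun hlt ↦ ?_⟩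
    · rintro hmin q - ⟨hqy, z, ⟨hz, hzq⟩, hzy⟩
      exact (hqy.trans_le (hmin z hz hzy)).not_ge hzq
    · obtain ⟨q, hq, hzq, hqy⟩ := hQdense.exists_between hlt
      exact h q hq ⟨hqy, z, ⟨hz, hzq.le⟩, hzy⟩
  rw [eq_diff]
  refine hC.measurableSet.diff (.biUnion hQ fun q _ ↦ ?_)
  have isCompact_image : IsCompact (f '' (C ∩ {z | φ z ≤ q})) :=
    (hC.inter_right (isClosed_le hφ continuous_const)).image hf
  exact (isOpen_lt continuous_const hφ).measurableSet.inter
    (hf.measurable isCompact_image.measurableSet)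

end FiberMinimizers

section Measure

open Set
open scoped ENNReal

theorem exists_injOn_subset_lt_measure_image {X Y : Type*} [MeasurableSpace X]
    [StandardBorelSpace X] [MeasurableSpace Y] [StandardBorelSpace Y] (μ : Measure X)
    [IsFiniteMeasure μ] {f : Y → X} (hf : Measurable f) {K : Set Y} (hK : MeasurableSet K)
    {c : ℝ≥0∞} (hc : c < μ (f '' K)) :
    ∃ H ⊆ K, MeasurableSet H ∧ InjOn f H ∧ c < μ (f '' H) := by
  let := upgradeStandardBorel X
  -- On the graph `g '' K`, the maps `f` and `φ` become the continuous coordinate projections.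
  let φ : Y → ℝ := embeddingReal Y
  let g (y : Y) : X × ℝ := (f y, φ y)
  have hg : Measurable g := hf.prodMk (measurable_embeddingReal Y)
  have fst_image (S : Set Y) : Prod.fst '' (g '' S) = f '' S := image_image _ _ _
  rw [← fst_image] at hc
  obtain ⟨C, hCK, hC, hcC⟩ :=
    exists_isCompact_subset_lt_measure_image μ continuous_fst (hK.analyticSet_image hg) hc
  let T := fiberMinimizers Prod.fst Prod.snd C
  have hT : MeasurableSet T := measurableSet_fiberMinimizers continuous_fst continuous_snd hC
  have injOn_T : InjOn Prod.fst T := injOn_fiberMinimizers Function.injective_id.injOn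
  have image_T : g '' (K ∩ g ⁻¹' T) = T := by
    rw [image_inter_preimage, inter_eq_right]
    exact (sep_subset _ _).trans hCK
  refine ⟨K ∩ g ⁻¹' T, inter_subset_left, hK.inter (hg hT), fun y hy z hz hyz ↦ ?_, ?_⟩
  · exact (measurableEmbedding_embeddingReal Y).injective (Prod.ext_iff.1 (injOn_T hy.2 hz.2 hyz)).2
  · rwa [← fst_image, image_T, image_fiberMinimizers continuous_fst continuous_snd hC]

theorem lintegral_count_inter_preimage_singleton_of_injOn {X Y : Type*} [MeasurableSpace X]
    [MeasurableSpace Y] [MeasurableSingletonClass Y] (μ : Measure X) {f : Y → X} {H : Set Y}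
    (hinj : InjOn f H) (himg : MeasurableSet (f '' H)) :
    ∫⁻ x, Measure.count (H ∩ f ⁻¹' {x}) ∂μ = μ (f '' H) := by
  rw [← lintegral_indicator_one himg]
  congr 1 with x
  by_cases hx : x ∈ f '' H
  · obtain ⟨y, hy, rfl⟩ := hx
    have fiber_eq : H ∩ f ⁻¹' {f y} = {y} :=
      eq_singleton_iff_unique_mem.2 ⟨⟨hy, rfl⟩, fun z hz ↦ hinj hz.1 hy hz.2⟩
    rw [fiber_eq, Measure.count_singleton, indicator_of_mem (mem_image_of_mem f hy), Pi.one_apply]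
  · have fiber_eq : H ∩ f ⁻¹' {x} = ∅ :=
      eq_empty_of_forall_notMem fun y hy ↦ hx ⟨y, hy.1, hy.2⟩
    rw [fiber_eq, measure_empty, indicator_of_notMem hx]

theorem lintegral_count_inter_preimage_singleton_eq_zero {X Y : Type*} [MeasurableSpace X]
    [MeasurableSpace Y] {μ : Measure X} {f : Y → X} {H : Set Y} (h : μ (f '' H) = 0) :
    ∫⁻ x, Measure.count (H ∩ f ⁻¹' {x}) ∂μ = 0 := by
  refine lintegral_eq_zero_of_ae_eq_zero ?_
  filter_upwards [measure_eq_zero_iff_ae_notMem.1 h] with x hx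
  have fiber_eq : H ∩ f ⁻¹' {x} = ∅ :=
    eq_empty_of_forall_notMem fun y hy ↦ hx ⟨y, hy.1, hy.2⟩
  rw [fiber_eq, measure_empty, Pi.zero_apply]

theorem exists_mem_countableBasis_disjoint_measure_inter_ne_zero {X : Type*} [TopologicalSpace X]
    [SecondCountableTopology X] [MeasurableSpace X] {μ : Measure X} {A Y : Set X}
    (hA : μ A ≠ 0) (hYclosed : IsClosed Y) (hY : μ Y = 0) :
    ∃ U ∈ TopologicalSpace.countableBasis X, Disjoint U Y ∧ μ (A ∩ U) ≠ 0 := by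
  by_contra! h
  rw [← measure_sdiff_null hY] at hA
  refine hA (measure_null_of_locally_null (A \ Y) fun x hx ↦ ?_)
  obtain ⟨U, hU, hxU, hUY⟩ := (TopologicalSpace.isBasis_countableBasis X).exists_subset_of_mem_open
    hx.2 hYclosed.isOpen_compl
  refine ⟨(A \ Y) ∩ U, inter_mem_nhdsWithin _
    ((TopologicalSpace.isOpen_of_mem_countableBasis hU).mem_nhds hxU), ?_⟩
  exact measure_mono_null (inter_subset_inter_left U sdiff_subset)
    (h U hU (subset_compl_iff_disjoint_right.1 hUY))

end Measure

namespace DMGroupoid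

open Set
open scoped ENNReal

variable {G X : Type} [MeasurableSpace G] [MeasurableSpace X] (D : DMGroupoid G X)

/-- A Borel bisection, that is, a Borel set of arrows on which the source and range maps are
injective; it is a partial isomorphism from its source `D.s '' H` to its range `D.r '' H`. -/
structure IsBisection (H : Set G) : Prop where
  measurableSet : MeasurableSet H
  injOn_s : InjOn D.s H
  injOn_r : InjOn D.r H

variable {D}

theorem SatErgodic.ae_infinite_arrows [StandardBorelSpace X] [NullSingletonClass D.μ]
    (herg : D.SatErgodic) {A : Set X} (hA : MeasurableSet A) (hA0 : D.μ A ≠ 0) :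
    ∀ᵐ x ∂D.μ, (D.s ⁻¹' A ∩ D.r ⁻¹' {x}).Infinite := by
  let := upgradeStandardBorel X
  have meets_basis : ∀ᵐ x ∂D.μ, ∀ U ∈ TopologicalSpace.countableBasis X, D.μ (A ∩ U) ≠ 0 →
      ∃ γ, D.s γ ∈ A ∩ U ∧ D.r γ = x := by
    simp only [ae_ball_iff (TopologicalSpace.countable_countableBasis X),
      Filter.eventually_imp_distrib_left]
    intro U hU hAU
    exact herg _ (hA.inter (TopologicalSpace.isOpen_of_mem_countableBasis hU).measurableSet) hAU
  filter_upwards [meets_basis] with x hx hfin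
  have sources_finite : (D.s '' (D.s ⁻¹' A ∩ D.r ⁻¹' {x})).Finite := hfin.image _
  obtain ⟨U, hU, hdisj, hAU⟩ := exists_mem_countableBasis_disjoint_measure_inter_ne_zero hA0
    sources_finite.isClosed (sources_finite.measure_zero D.μ)
  obtain ⟨γ, ⟨hγA, hγU⟩, hγx⟩ := hx U hU hAU
  exact disjoint_left.1 hdisj hγU ⟨γ, ⟨hγA, hγx⟩, rfl⟩

theorem measure_image_r_diff_ne_zero {F K : Set G} (hF : MeasurableSet F)
    (hFfin : D.gMeasure F ≠ ∞) {B : Set X} (hB : MeasurableSet B) (hB0 : D.μ B ≠ 0)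
    (hK : ∀ᵐ x ∂D.μ, (K ∩ D.r ⁻¹' {x}).Infinite) :
    D.μ (D.r '' ((K ∩ D.r ⁻¹' B) \ F)) ≠ 0 := by
  refine fun hnull ↦ hFfin (top_unique ?_)
  calc ∞ = ∫⁻ _ in B, ∞ ∂D.μ := by rw [setLIntegral_const, ENNReal.top_mul hB0]
    _ ≤ ∫⁻ x in B, Measure.count (F ∩ D.r ⁻¹' {x}) ∂D.μ := by
      refine lintegral_mono_ae ((ae_restrict_iff' hB).2 ?_)
      filter_upwards [measure_eq_zero_iff_ae_notMem.1 hnull, hK] with x hx hinf hxB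
      have subset_F : K ∩ D.r ⁻¹' {x} ⊆ F ∩ D.r ⁻¹' {x} := by
        rintro γ ⟨hγK, rfl⟩
        exact ⟨by_contra fun hγF ↦ hx ⟨γ, ⟨⟨hγK, hxB⟩, hγF⟩, rfl⟩, rfl⟩
      exact (Measure.count_apply_infinite (hinf.mono subset_F)).ge
    _ ≤ ∫⁻ x, Measure.count (F ∩ D.r ⁻¹' {x}) ∂D.μ := setLIntegral_le_lintegral _ _
    _ = D.gMeasure F := (D.invariant F hF).symm

theorem IsBisection.union {H₁ H₂ : Set G} (h₁ : D.IsBisection H₁) (h₂ : D.IsBisection H₂)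
    (hs : Disjoint (D.s '' H₁) (D.s '' H₂)) (hr : Disjoint (D.r '' H₁) (D.r '' H₂)) :
    D.IsBisection (H₁ ∪ H₂) := by
  have hdisj : Disjoint H₁ H₂ := .of_image hs
  refine ⟨h₁.measurableSet.union h₂.measurableSet,
    (injOn_union hdisj).2 ⟨h₁.injOn_s, h₂.injOn_s, ?_⟩,
    (injOn_union hdisj).2 ⟨h₁.injOn_r, h₂.injOn_r, ?_⟩⟩
  · exact fun a ha b hb ↦ hs.ne_of_mem (mem_image_of_mem _ ha) (mem_image_of_mem _ hb)
  · exact fun a ha b hb ↦ hr.ne_of_mem (mem_image_of_mem _ ha) (mem_image_of_mem _ hb)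

theorem IsBisection.iUnion_of_directed {ι : Type*} [Countable ι] {H : ι → Set G}
    (h : ∀ i, D.IsBisection (H i)) (hH : Directed (· ⊆ ·) H) : D.IsBisection (⋃ i, H i) where
  measurableSet := .iUnion fun i ↦ (h i).measurableSet
  injOn_s := inj_on_iUnion_of_directed hH fun i ↦ (h i).injOn_s
  injOn_r := inj_on_iUnion_of_directed hH fun i ↦ (h i).injOn_r

theorem exists_maximal_isBisection {V E : Set G} (hE : D.IsBisection E) (hEV : E ⊆ V) :
    ∃ M, D.IsBisection M ∧ E ⊆ M ∧ M ⊆ V ∧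
      ∀ N, D.IsBisection N → M ⊆ N → N ⊆ V → D.μ (D.s '' N) ≤ D.μ (D.s '' M) := by
  have hbdd (S : ℕ → {H // D.IsBisection H ∧ H ⊆ V}) (hS : Monotone S) : BddAbove (range S) := by
    refine ⟨⟨⋃ n, (S n).1, .iUnion_of_directed (fun n ↦ (S n).2.1) hS.directed_le,
      iUnion_subset fun n ↦ (S n).2.2⟩, ?_⟩
    rintro _ ⟨n, rfl⟩
    exact subset_iUnion (fun n ↦ (S n).1) n
  obtain ⟨⟨M, hM, hMV⟩, hEM, hmax⟩ := exists_ge_forall_ge_le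
    (m := fun H : {H // D.IsBisection H ∧ H ⊆ V} ↦ D.μ (D.s '' H.1))
    (fun _ _ h ↦ measure_mono (image_mono h)) hbdd ⟨E, hE, hEV⟩
  exact ⟨M, hM, hEM, hMV, fun N hN hMN hNV ↦ hmax ⟨N, hN, hNV⟩ hMN⟩

variable [StandardBorelSpace G] [StandardBorelSpace X]

theorem IsBisection.measurableSet_image_s {H : Set G} (hH : D.IsBisection H) :
    MeasurableSet (D.s '' H) :=
  hH.measurableSet.image_of_measurable_injOn D.meas_s hH.injOn_s

theorem IsBisection.measurableSet_image_r {H : Set G} (hH : D.IsBisection H) :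
    MeasurableSet (D.r '' H) :=
  hH.measurableSet.image_of_measurable_injOn D.meas_r hH.injOn_r

theorem IsBisection.measure_image_s_eq_measure_image_r {H : Set G} (hH : D.IsBisection H) :
    D.μ (D.s '' H) = D.μ (D.r '' H) := by
  rw [← lintegral_count_inter_preimage_singleton_of_injOn D.μ hH.injOn_s hH.measurableSet_image_s,
    ← lintegral_count_inter_preimage_singleton_of_injOn D.μ hH.injOn_r hH.measurableSet_image_r,
    D.invariant H hH.measurableSet]

theorem IsBisection.measure_compl_image_s_eq_measure_compl_image_r [IsFiniteMeasure D.μ] {H : Set G}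
    (hH : D.IsBisection H) : D.μ (D.s '' H)ᶜ = D.μ (D.r '' H)ᶜ := by
  rw [measure_compl hH.measurableSet_image_s (measure_ne_top _ _),
    measure_compl hH.measurableSet_image_r (measure_ne_top _ _),
    hH.measure_image_s_eq_measure_image_r]

variable [IsFiniteMeasure D.μ]

theorem exists_isBisection_subset_measure_image_s_ne_zero {K : Set G} (hK : MeasurableSet K)
    (hK0 : D.μ (D.r '' K) ≠ 0) :
    ∃ H ⊆ K, D.IsBisection H ∧ D.μ (D.s '' H) ≠ 0 := by
  obtain ⟨R, hRK, hR, injOn_r, hrR⟩ :=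
    exists_injOn_subset_lt_measure_image D.μ D.meas_r hK hK0.bot_lt
  have hsR : D.μ (D.s '' R) ≠ 0 := fun hnull ↦ hrR.ne' <| by
    rw [← lintegral_count_inter_preimage_singleton_of_injOn D.μ injOn_r
      (hR.image_of_measurable_injOn D.meas_r injOn_r), ← D.invariant R hR]
    exact lintegral_count_inter_preimage_singleton_eq_zero hnull
  obtain ⟨H, hHR, hH, injOn_s, hsH⟩ :=
    exists_injOn_subset_lt_measure_image D.μ D.meas_s hR hsR.bot_lt
  exact ⟨H, hHR.trans hRK, ⟨hH, injOn_s, injOn_r.mono hHR⟩, hsH.ne'⟩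

variable [NullSingletonClass D.μ]

theorem SatErgodic.exists_isBisection_between (herg : D.SatErgodic) {F : Set G}
    (hF : MeasurableSet F) (hFfin : D.gMeasure F ≠ ∞) {A B : Set X} (hA : MeasurableSet A)
    (hB : MeasurableSet B) (hA0 : D.μ A ≠ 0) (hB0 : D.μ B ≠ 0) :
    ∃ H ⊆ (D.s ⁻¹' A ∩ D.r ⁻¹' B) \ F, D.IsBisection H ∧ D.μ (D.s '' H) ≠ 0 :=
  exists_isBisection_subset_measure_image_s_ne_zero (((D.meas_s hA).inter (D.meas_r hB)).diff hF)
    (measure_image_r_diff_ne_zero hF hFfin hB hB0 (herg.ae_infinite_arrows hA hA0))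

theorem IsBisection.exists_superset_measure_image_s_lt (herg : D.SatErgodic) {F M : Set G}
    (hF : MeasurableSet F) (hFfin : D.gMeasure F ≠ ∞) (hM : D.IsBisection M) (hMF : M ⊆ Fᶜ)
    (hM0 : D.μ (D.s '' M)ᶜ ≠ 0) :
    ∃ N, D.IsBisection N ∧ M ⊆ N ∧ N ⊆ Fᶜ ∧ D.μ (D.s '' M) < D.μ (D.s '' N) := by
  obtain ⟨H, hHsub, hH, hH0⟩ := herg.exists_isBisection_between hF hFfin
    hM.measurableSet_image_s.compl hM.measurableSet_image_r.compl hM0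
    (hM.measure_compl_image_s_eq_measure_compl_image_r ▸ hM0)
  have disjoint_s : Disjoint (D.s '' M) (D.s '' H) :=
    subset_compl_iff_disjoint_left.1 (image_subset_iff.2 fun γ hγ ↦ (hHsub hγ).1.1)
  have disjoint_r : Disjoint (D.r '' M) (D.r '' H) :=
    subset_compl_iff_disjoint_left.1 (image_subset_iff.2 fun γ hγ ↦ (hHsub hγ).1.2)
  refine ⟨M ∪ H, hM.union hH disjoint_s disjoint_r, subset_union_left,
    union_subset hMF fun γ hγ ↦ (hHsub hγ).2, ?_⟩
  rw [image_union, measure_union disjoint_s hH.measurableSet_image_s]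
  exact ENNReal.lt_add_right (measure_ne_top _ _) hH0

end DMGroupoid

/-- in an ergodic discrete measured groupoid with atom-free unit space
measure, given a finite-measure Borel set `F ⊆ G` and a Borel set `E ⊆ G \ F` on which
both `s` and `r` are injective, there is a Borel set `D'` with `E ⊆ D' ⊆ G \ F`, with
`s`, `r` injective on `D'` and `s(D') = G⁰` (hence also `r(D') = G⁰`) up to null sets. -/
theorem exists_full_partial_isomorphism {G X : Type}
    [MeasurableSpace G] [MeasurableSpace X]
    [StandardBorelSpace G] [StandardBorelSpace X]
    (D : DMGroupoid G X) [IsProbabilityMeasure D.μ]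
    (herg : D.SatErgodic) (hatom : ∀ x : X, D.μ {x} = 0)
    (F : Set G) (hF : MeasurableSet F) (hFfin : D.gMeasure F ≠ ⊤)
    (E : Set G) (hE : MeasurableSet E) (hEF : E ⊆ Fᶜ)
    (hsE : Set.InjOn D.s E) (hrE : Set.InjOn D.r E) :
    ∃ D' : Set G, MeasurableSet D' ∧ E ⊆ D' ∧ D' ⊆ Fᶜ ∧
      Set.InjOn D.s D' ∧ Set.InjOn D.r D' ∧
      D.μ (D.s '' D')ᶜ = 0 ∧ D.μ (D.r '' D')ᶜ = 0 := by
  have : NullSingletonClass D.μ := ⟨hatom⟩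
  obtain ⟨M, hM, hEM, hMF, hmax⟩ := DMGroupoid.exists_maximal_isBisection ⟨hE, hsE, hrE⟩ hEF
  have hsM : D.μ (D.s '' M)ᶜ = 0 := by
    by_contra hM0
    obtain ⟨N, hN, hMN, hNF, hlt⟩ := hM.exists_superset_measure_image_s_lt herg hF hFfin hMF hM0
    exact hlt.not_ge (hmax N hN hMN hNF)
  have hrM : D.μ (D.r '' M)ᶜ = 0 := hM.measure_compl_image_s_eq_measure_compl_image_r ▸ hsM
  exact ⟨M, hM.measurableSet, hEM, hMF, hM.injOn_s, hM.injOn_r, hsM, hrM⟩
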